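/- arXiv:dg-ga/9608005 — 2 statements merged into one kernel-verified Lean document; each statement's English description precedes it below -/
import Mathlib

section
/- Let k ≥ 1. Let B₁ = B(c₁, r₁) ⊆ ℂ be an open disk and, for i = 2, …, k, let B_i = B(c_i, r_i) be open disks whose closures are pairwise disjoint and contained in B₁, and set G = B₁ ∖ (B̄₂ ∪ … ∪ B̄_k) (a circular region). Then every h ∈ 𝒪_(c)(Ḡ) admits a unique decomposition h = h₁ + h₂ + ⋯ + h_k on Ḡ, where: h₁ is continuous on B̄₁ and holomorphic on B₁; and for each i = 2, …, k, h_i is continuous on ℂ ∖ B_i, holomorphic on ℂ ∖ B̄_i, and h_i(z) → 0 as |z| → ∞. Moreover, h₁ is given on B₁ by the Cauchy integral h₁(z) = (1/2πi) ∮_{∂B₁} h(w)/(w−z) dw (counterclockwise). -/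
open Metric Filter Topology


/-- The Cauchy integral of `f` over the circle `C(c, R)`. -/
noncomputable def crdCauchy (f : ℂ → ℂ) (c : ℂ) (R : ℝ) (z : ℂ) : ℂ :=
  (2 * (Real.pi : ℂ) * Complex.I)⁻¹ * ∮ w in C(c, R), f w / (w - z)

lemma crd_cauchy_differentiableAt {f : ℂ → ℂ} {c : ℂ} {R : ℝ} (hR : 0 < R)
    (hf : ContinuousOn f (sphere c R)) {z : ℂ} (hz : z ∉ sphere c R) :
    DifferentiableAt ℂ (crdCauchy f c R) z := by
  unfold crdCauchy
  apply DifferentiableAt.const_mul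
  simp only [circleIntegral]
  obtain ⟨ε, hε, hball⟩ := Metric.isOpen_iff.1 (isClosed_sphere (x := c) (ε := R)).isOpen_compl z hz
  have hmem : ∀ θ, circleMap c R θ ∈ sphere c R := fun θ => circleMap_mem_sphere c hR.le θ
  have hdist : ∀ θ, ∀ x ∈ ball z (ε/2), ε/2 ≤ ‖circleMap c R θ - x‖ := by
    intro θ x hx
    by_contra hlt
    push Not at hlt
    refine hball (a := circleMap c R θ) ?_ (hmem θ)
    rw [mem_ball] at hx ⊢
    rw [← dist_eq_norm] at hlt
    linarith [dist_triangle (circleMap c R θ) x z]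
  have hne : ∀ θ, ∀ x ∈ ball z (ε/2), circleMap c R θ - x ≠ 0 := by
    intro θ x hx h0
    have := hdist θ x hx
    rw [h0, norm_zero] at this
    linarith
  have hzb : z ∈ ball z (ε/2) := mem_ball_self (by linarith)
  have hfc : Continuous (fun θ => f (circleMap c R θ)) :=
    hf.comp_continuous (continuous_circleMap c R) hmem
  obtain ⟨M, hM⟩ := (isCompact_sphere c R).exists_bound_of_continuousOn hf
  have hM0 : 0 ≤ M := (norm_nonneg _).trans (hM _ (hmem 0))
  have hF : ∀ x ∈ ball z (ε/2), Continuous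
      (fun θ => deriv (circleMap c R) θ • (f (circleMap c R θ) / (circleMap c R θ - x))) := by
    intro x hx
    simp only [deriv_circleMap]
    exact ((continuous_circleMap 0 R).mul continuous_const).smul
      (hfc.div ((continuous_circleMap c R).sub continuous_const) (fun θ => hne θ x hx))
  have hF' : ∀ x ∈ ball z (ε/2), Continuous
      (fun θ => deriv (circleMap c R) θ • (f (circleMap c R θ) / (circleMap c R θ - x)^2)) := by
    intro x hx
    simp only [deriv_circleMap]
    exact ((continuous_circleMap 0 R).mul continuous_const).smul
      (hfc.div (((continuous_circleMap c R).sub continuous_const).pow 2)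
        (fun θ => pow_ne_zero 2 (hne θ x hx)))
  refine (intervalIntegral.hasDerivAt_integral_of_dominated_loc_of_deriv_le
    (F := fun x θ => deriv (circleMap c R) θ • (f (circleMap c R θ) / (circleMap c R θ - x)))
    (F' := fun x θ => deriv (circleMap c R) θ • (f (circleMap c R θ) / (circleMap c R θ - x)^2))
    (bound := fun _ => R * (M / (ε/2)^2))
    (ball_mem_nhds z (half_pos hε)) ?_ ?_ ?_ ?_ ?_ ?_).2.differentiableAt
  · filter_upwards [ball_mem_nhds z (half_pos hε)] with x hx
    exact (hF x hx).aestronglyMeasurable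
  · exact (hF z hzb).intervalIntegrable _ _
  · exact (hF' z hzb).aestronglyMeasurable
  · refine Eventually.of_forall fun θ _ x hx => ?_
    rw [norm_smul, norm_div, norm_pow]
    have h1 : ‖deriv (circleMap c R) θ‖ = R := by
      simp [deriv_circleMap, abs_of_pos hR]
    rw [h1]
    have := hdist θ x hx
    have := hM _ (hmem θ)
    gcongr
  · exact intervalIntegrable_const
  · refine Eventually.of_forall fun θ _ x hx => ?_
    have h1 : HasDerivAt (fun x : ℂ => circleMap c R θ - x) (-1) x := by
      simpa using (hasDerivAt_id x).const_sub (circleMap c R θ)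
    have h2 := ((h1.inv (hne θ x hx)).const_mul (f (circleMap c R θ))).const_mul
      (deriv (circleMap c R) θ)
    refine (h2.congr_deriv ?_).congr_of_eventuallyEq (Eventually.of_forall fun y => ?_)
    · simp [div_eq_mul_inv]
    · simp [div_eq_mul_inv]

lemma crd_cauchy_tendsto {f : ℂ → ℂ} {c : ℂ} {R : ℝ} (hR : 0 < R)
    (hf : ContinuousOn f (sphere c R)) :
    Tendsto (crdCauchy f c R) (cocompact ℂ) (𝓝 0) := by
  obtain ⟨M, hM⟩ := (isCompact_sphere c R).exists_bound_of_continuousOn hf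
  have hM0 : 0 ≤ M := (norm_nonneg _).trans (hM _ (circleMap_mem_sphere c hR.le 0))
  have hd : Tendsto (fun z => dist z c) (cocompact ℂ) atTop := tendsto_dist_right_cocompact_atTop c
  have hd2 : Tendsto (fun z => dist z c - R) (cocompact ℂ) atTop :=
    tendsto_atTop_add_const_right _ _ hd
  have hlim : Tendsto (fun z => R * (M / (dist z c - R))) (cocompact ℂ) (𝓝 0) := by
    simpa using (hd2.const_div_atTop M).const_mul R
  refine squeeze_zero_norm' ?_ hlim
  filter_upwards [hd2.eventually_gt_atTop 0] with z hz
  have := circleIntegral.norm_two_pi_i_inv_smul_integral_le_of_norm_le_const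
    (f := fun w => f w / (w - z)) (c := c) hR.le (C := M / (dist z c - R)) ?_
  · simpa only [crdCauchy, smul_eq_mul] using this
  · intro w hw
    rw [norm_div]
    have h1 : dist z c - R ≤ ‖w - z‖ := by
      rw [← dist_eq_norm]
      have := dist_triangle z w c
      rw [mem_sphere.1 hw, dist_comm z w] at this
      linarith
    have := hM w hw
    gcongr

lemma crd_annulus {f : ℂ → ℂ} {c : ℂ} {r R : ℝ} (hr : 0 < r) (hrR : r < R)
    (hf : ContinuousOn f (closedBall c R \ ball c r))
    (hd : DifferentiableOn ℂ f (ball c R \ closedBall c r)) {z : ℂ}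
    (hz : z ∈ ball c R \ closedBall c r) :
    f z = crdCauchy f c R z - crdCauchy f c r z := by
  have hopen : IsOpen (ball c R \ closedBall c r) := isOpen_ball.sdiff isClosed_closedBall
  have hzA : closedBall c R \ ball c r ∈ 𝓝 z := by
    filter_upwards [hopen.mem_nhds hz] with x hx
    exact ⟨ball_subset_closedBall hx.1, fun h => hx.2 (ball_subset_closedBall h)⟩
  have hdz : DifferentiableAt ℂ f z := (hd z hz).differentiableAt (hopen.mem_nhds hz)
  have key := Complex.circleIntegral_eq_of_differentiable_on_annulus_off_countable
    (f := dslope f z) hr hrR.le (Set.countable_singleton z)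
    ((continuousOn_dslope hzA).2 ⟨hf, hdz⟩)
    (fun w hw => (differentiableAt_dslope_of_ne (Set.mem_compl_singleton_iff.1 hw.2)).2
      ((hd w hw.1).differentiableAt (hopen.mem_nhds hw.1)))
  have hsR : sphere c R ⊆ closedBall c R \ ball c r := fun w hw => by
    rw [mem_sphere] at hw
    simp [hw, hrR.le]
  have hsr : sphere c r ⊆ closedBall c R \ ball c r := fun w hw => by
    rw [mem_sphere] at hw
    simp [hw, hrR.le]
  have hnR : ∀ w ∈ sphere c R, w - z ≠ 0 := by
    intro w hw h0
    rw [sub_eq_zero.1 h0, mem_sphere] at hw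
    have := mem_ball.1 hz.1
    linarith
  have hnr : ∀ w ∈ sphere c r, w - z ≠ 0 := by
    intro w hw h0
    rw [sub_eq_zero.1 h0] at hw
    exact hz.2 (sphere_subset_closedBall hw)
  have split : ∀ ρ, 0 < ρ → sphere c ρ ⊆ closedBall c R \ ball c r →
      (∀ w ∈ sphere c ρ, w - z ≠ 0) → (∮ w in C(c, ρ), dslope f z w) =
        (∮ w in C(c, ρ), f w / (w - z)) - f z * ∮ w in C(c, ρ), (w - z)⁻¹ := by
    intro ρ hρ hs hn
    have hi : ContinuousOn (fun w => (w - z)⁻¹) (sphere c ρ) :=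
      (continuousOn_id.sub continuousOn_const).inv₀ hn
    rw [← circleIntegral.integral_const_mul, ← circleIntegral.integral_sub]
    · refine circleIntegral.integral_congr hρ.le fun w hw => ?_
      rw [dslope_of_ne _ (sub_ne_zero.1 (hn w hw)), slope_def_field]
      ring
    · exact ((hf.mono hs).div (continuousOn_id.sub continuousOn_const) hn).circleIntegrable hρ.le
    · exact (continuousOn_const.mul hi).circleIntegrable hρ.le
  rw [split R (hr.trans hrR) hsR hnR, split r hr hsr hnr,
    circleIntegral.integral_sub_inv_of_mem_ball hz.1] at key
  have h0 : (∮ w in C(c, r), (w - z)⁻¹) = 0 := by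
    refine Complex.circleIntegral_eq_zero_of_differentiable_on_off_countable hr.le
      Set.countable_empty (f := fun w => (w - z)⁻¹) ?_ ?_
    · refine (continuousOn_id.sub continuousOn_const).inv₀ fun w hw h0 => hz.2 ?_
      have h1 : w = z := sub_eq_zero.1 h0
      rwa [← h1]
    · intro w hw
      refine (differentiableAt_id.sub_const z).inv fun h0 => hz.2 ?_
      have h1 : w = z := sub_eq_zero.1 h0
      rw [← h1]
      exact ball_subset_closedBall hw.1
  rw [h0] at key
  unfold crdCauchy
  rw [← mul_sub]
  have h2 : (2 * (Real.pi : ℂ) * Complex.I) ≠ 0 := Complex.two_pi_I_ne_zero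
  field_simp
  linear_combination -key

/-- Splitting off the principal part at one hole. -/
lemma crd_hole {h : ℂ → ℂ} {c : ℂ} {r R : ℝ} (hr : 0 < r) (hrR : r < R)
    (hf : ContinuousOn h (closedBall c R \ ball c r))
    (hd : DifferentiableOn ℂ h (ball c R \ closedBall c r)) :
    ∃ F K : ℂ → ℂ, DifferentiableOn ℂ K (ball c R) ∧ ContinuousOn F (ball c r)ᶜ ∧
      DifferentiableOn ℂ F (closedBall c r)ᶜ ∧ Tendsto F (cocompact ℂ) (𝓝 0) ∧
      ∀ z ∈ ball c R, F z = h z - K z := by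
  classical
  have hsR : sphere c R ⊆ closedBall c R \ ball c r := fun w hw => by
    rw [mem_sphere] at hw
    simp [hw, hrR.le]
  have hsr : sphere c r ⊆ closedBall c R \ ball c r := fun w hw => by
    rw [mem_sphere] at hw
    simp [hw, hrR.le]
  let K := crdCauchy h c R
  let F : ℂ → ℂ := fun z => if z ∈ ball c R then h z - K z else - crdCauchy h c r z
  have hK : DifferentiableOn ℂ K (ball c R) := fun z hz =>
    (crd_cauchy_differentiableAt (hr.trans hrR) (hf.mono hsR) (fun hs => by
      rw [mem_ball] at hz; rw [mem_sphere] at hs; linarith)).differentiableWithinAt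
  have hFball : ∀ z ∈ ball c R, F z = h z - K z := fun z hz => if_pos hz
  have hFout : ∀ z ∈ (closedBall c r)ᶜ, F z = - crdCauchy h c r z := by
    intro z hz
    by_cases hzb : z ∈ ball c R
    · rw [hFball z hzb, crd_annulus hr hrR hf hd ⟨hzb, hz⟩]
      ring
    · exact if_neg hzb
  have hFd : DifferentiableOn ℂ F (closedBall c r)ᶜ := by
    refine DifferentiableOn.congr (f := fun z => - crdCauchy h c r z) ?_ hFout
    intro z hz
    exact (crd_cauchy_differentiableAt hr (hf.mono hsr) (fun hs =>
      hz (sphere_subset_closedBall hs))).neg.differentiableWithinAt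
  refine ⟨F, K, hK, ?_, hFd, ?_, hFball⟩
  · intro z hz
    by_cases hzc : z ∈ closedBall c r
    · have hzR : z ∈ ball c R := closedBall_subset_ball hrR hzc
      have h1 : ContinuousWithinAt (fun z => h z - K z) (ball c R ∩ (ball c r)ᶜ) z := by
        refine ContinuousWithinAt.sub ((hf z ⟨ball_subset_closedBall hzR, hz⟩).mono ?_)
          ((hK.continuousOn z hzR).mono Set.inter_subset_left)
        exact fun x hx => ⟨ball_subset_closedBall hx.1, hx.2⟩
      have h2 : ContinuousWithinAt F (ball c R ∩ (ball c r)ᶜ) z :=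
        h1.congr (fun x hx => hFball x hx.1) (hFball z hzR)
      rw [Set.inter_comm] at h2
      exact (continuousWithinAt_inter (isOpen_ball.mem_nhds hzR)).1 h2
    · exact ((hFd z hzc).differentiableAt
        (isClosed_closedBall.isOpen_compl.mem_nhds hzc)).continuousAt.continuousWithinAt
  · have h1 : Tendsto (fun z => - crdCauchy h c r z) (cocompact ℂ) (𝓝 0) := by
      simpa using (crd_cauchy_tendsto hr (hf.mono hsr)).neg
    refine h1.congr' ?_
    filter_upwards [(isCompact_closedBall c r).compl_mem_cocompact] with z hz
    exact (hFout z hz).symm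

/-- Cauchy integrals of functions holomorphic outside vanish inside. -/
lemma crd_outer_zero {F : ℂ → ℂ} {c : ℂ} {R : ℝ} (hR : 0 < R)
    (hF : ∀ z, z ∉ ball c R → DifferentiableAt ℂ F z)
    (hlim : Tendsto F (cocompact ℂ) (𝓝 0)) {z : ℂ} (hz : z ∈ ball c R) :
    (∮ w in C(c, R), F w / (w - z)) = 0 := by
  have hne : ∀ w, w ∉ ball c R → w - z ≠ 0 := by
    intro w hw h0
    rw [sub_eq_zero.1 h0] at hw
    exact hw hz
  have hdd : ∀ w, w ∉ ball c R → DifferentiableAt ℂ (fun w => F w / (w - z)) w := fun w hw =>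
    (hF w hw).div (differentiableAt_id.sub_const z) (hne w hw)
  have hconst : ∀ S, R ≤ S → (∮ w in C(c, S), F w / (w - z)) = ∮ w in C(c, R), F w / (w - z) := by
    intro S hS
    refine Complex.circleIntegral_eq_of_differentiable_on_annulus_off_countable hR hS
      Set.countable_empty ?_ ?_
    · exact fun w hw => (hdd w hw.2).continuousAt.continuousWithinAt
    · exact fun w hw => hdd w (fun hb => hw.1.2 (ball_subset_closedBall hb))
  have hzd : 0 < R - dist z c := sub_pos.2 hz
  refine norm_le_zero_iff.1 (le_of_forall_pos_le_add fun ε hε => ?_)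
  rw [zero_add]
  set δ := ε * (R - dist z c) / (2 * Real.pi * R) with hδ
  have hδ0 : 0 < δ := by positivity
  have hev : ∀ᶠ w in cocompact ℂ, ‖F w‖ < δ := by
    have := (tendsto_zero_iff_norm_tendsto_zero.1 hlim).eventually_lt_const hδ0
    exact this
  rw [← Metric.cobounded_eq_cocompact, (hasBasis_cobounded_compl_closedBall c).eventually_iff] at hev
  obtain ⟨S0, -, hS0⟩ := hev
  set S := max R (S0 + 1) with hS
  have hRS : R ≤ S := le_max_left _ _
  rw [← hconst S hRS]
  have hb := circleIntegral.norm_integral_le_of_norm_le_const (f := fun w => F w / (w - z)) (c := c)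
    (R := S) (C := δ / (S - dist z c)) (hR.le.trans hRS) ?_
  · refine hb.trans ?_
    have hSz : 0 < S - dist z c := by linarith
    have h3 : S / (S - dist z c) ≤ R / (R - dist z c) := by
      rw [div_le_div_iff₀ hSz hzd]
      nlinarith [dist_nonneg (x := z) (y := c)]
    calc 2 * Real.pi * S * (δ / (S - dist z c)) = 2 * Real.pi * δ * (S / (S - dist z c)) := by ring
      _ ≤ 2 * Real.pi * δ * (R / (R - dist z c)) := by gcongr
      _ = ε := by rw [hδ]; field_simp
  · intro w hw
    rw [norm_div]
    have hSz : 0 < S - dist z c := by linarith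
    have h1 : S - dist z c ≤ ‖w - z‖ := by
      rw [← dist_eq_norm]
      have := dist_triangle w z c
      rw [mem_sphere.1 hw] at this
      linarith
    have h2 : ‖F w‖ ≤ δ := by
      refine (hS0 (x := w) ?_).le
      simp only [Set.mem_compl_iff, mem_closedBall, not_le, mem_sphere.1 hw]
      exact (lt_add_one S0).trans_le (le_max_right _ _)
    gcongr

/-- Liouville gluing. -/
lemma crd_glue {U V : Set ℂ} (hU : IsOpen U) (hV : IsOpen V) (hUV : ∀ z, z ∈ U ∨ z ∈ V)
    {f g : ℂ → ℂ} (hf : DifferentiableOn ℂ f U) (hg : DifferentiableOn ℂ g V)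
    (heq : ∀ z ∈ U, z ∈ V → f z = g z) (hVc : V ∈ cocompact ℂ)
    (hlim : Tendsto g (cocompact ℂ) (𝓝 0)) :
    (∀ z ∈ U, f z = 0) ∧ ∀ z ∈ V, g z = 0 := by
  classical
  let E : ℂ → ℂ := fun z => if z ∈ V then g z else f z
  have hEV : ∀ z ∈ V, E z = g z := fun z hz => if_pos hz
  have hEU : ∀ z ∈ U, E z = f z := fun z hz => by
    by_cases h : z ∈ V
    · rw [hEV z h, heq z hz h]
    · exact if_neg h
  have hE : Differentiable ℂ E := by
    intro z
    rcases hUV z with h | h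
    · exact ((hf.congr hEU) z h).differentiableAt (hU.mem_nhds h)
    · exact ((hg.congr hEV) z h).differentiableAt (hV.mem_nhds h)
  have hE0 : Tendsto E (cocompact ℂ) (𝓝 0) := by
    refine hlim.congr' ?_
    filter_upwards [hVc] with z hz
    exact (hEV z hz).symm
  have h0 : ∀ z, E z = 0 := fun z => hE.apply_eq_of_tendsto_cocompact z hE0
  exact ⟨fun z hz => (hEU z hz).symm.trans (h0 z), fun z hz => (hEV z hz).symm.trans (h0 z)⟩

lemma crd_closure {m : ℕ} {c₀ : ℂ} {r₀ : ℝ} (hr₀ : 0 < r₀)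
    {c : Fin m → ℂ} {r : Fin m → ℝ} (hr : ∀ i, 0 < r i)
    (hsub : ∀ i, closedBall (c i) (r i) ⊆ ball c₀ r₀)
    (hdisj : ∀ i j, i ≠ j → Disjoint (closedBall (c i) (r i)) (closedBall (c j) (r j)))
    {z : ℂ} (hz : z ∈ closedBall c₀ r₀) (hzi : ∀ i, z ∉ ball (c i) (r i)) :
    z ∈ closure (ball c₀ r₀ \ ⋃ i, closedBall (c i) (r i)) := by
  by_cases h : ∃ i, z ∈ closedBall (c i) (r i)
  · obtain ⟨i, hi⟩ := h
    let U : Set ℂ := ball c₀ r₀ \ ⋃ j ∈ {j | j ≠ i}, closedBall (c j) (r j)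
    have hU : IsOpen U := isOpen_ball.sdiff
      ((Set.toFinite _).isClosed_biUnion fun _ _ => isClosed_closedBall)
    have hzU : z ∈ U := by
      refine ⟨hsub i hi, ?_⟩
      simp only [Set.mem_iUnion, not_exists]
      intro j hj hzj
      exact Set.disjoint_left.1 (hdisj j i hj) hzj hi
    have hzc : z ∈ closure (closedBall (c i) (r i))ᶜ := by
      rw [closure_compl, interior_closedBall _ (hr i).ne']
      exact hzi i
    refine closure_mono ?_ (hU.inter_closure ⟨hzU, hzc⟩)
    rintro w ⟨hwU, hwc⟩
    refine ⟨hwU.1, ?_⟩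
    simp only [Set.mem_iUnion, not_exists]
    intro j hj
    by_cases hji : j = i
    · subst hji
      exact hwc hj
    · exact hwU.2 (Set.mem_biUnion (show j ∈ {j | j ≠ i} from hji) hj)
  · have hU : IsOpen (⋃ i, closedBall (c i) (r i))ᶜ :=
      (isClosed_iUnion_of_finite fun _ => isClosed_closedBall).isOpen_compl
    have hzU : z ∈ (⋃ i, closedBall (c i) (r i))ᶜ := by
      simpa only [Set.mem_compl_iff, Set.mem_iUnion] using h
    rw [← closure_ball c₀ hr₀.ne'] at hz
    refine closure_mono ?_ (hU.inter_closure ⟨hzU, hz⟩)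
    exact fun w hw => ⟨hw.2, hw.1⟩

lemma crd_radius {m : ℕ} {c₀ : ℂ} {r₀ : ℝ}
    {c : Fin m → ℂ} {r : Fin m → ℝ} (hr : ∀ i, 0 < r i)
    (hsub : ∀ i, closedBall (c i) (r i) ⊆ ball c₀ r₀)
    (hdisj : ∀ i j, i ≠ j → Disjoint (closedBall (c i) (r i)) (closedBall (c j) (r j)))
    (i : Fin m) : ∃ R, r i < R ∧ closedBall (c i) R ⊆ ball c₀ r₀ ∧
      ∀ j, j ≠ i → ∀ z ∈ closedBall (c i) R, z ∉ closedBall (c j) (r j) := by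
  let U : Set ℂ := ball c₀ r₀ \ ⋃ j ∈ {j | j ≠ i}, closedBall (c j) (r j)
  have hU : IsOpen U := isOpen_ball.sdiff
    ((Set.toFinite _).isClosed_biUnion fun _ _ => isClosed_closedBall)
  have hiU : closedBall (c i) (r i) ⊆ U := by
    intro z hi
    refine ⟨hsub i hi, ?_⟩
    simp only [Set.mem_iUnion, not_exists]
    intro j hj hzj
    exact Set.disjoint_left.1 (hdisj j i hj) hzj hi
  obtain ⟨δ, hδ, hsubU⟩ := (isCompact_closedBall (c i) (r i)).exists_cthickening_subset_open hU hiU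
  rw [cthickening_closedBall hδ.le (hr i).le] at hsubU
  refine ⟨δ + r i, by linarith, fun z hz => (hsubU hz).1, fun j hj z hz hzj => ?_⟩
  exact (hsubU hz).2 (Set.mem_biUnion (show j ∈ {j | j ≠ i} from hj) hzj)

/-- Uniqueness in the homogeneous case. -/
lemma crd_unique {m : ℕ} {c₀ : ℂ} {r₀ : ℝ}
    {c : Fin m → ℂ} {r : Fin m → ℝ}
    (hsub : ∀ i, closedBall (c i) (r i) ⊆ ball c₀ r₀)
    (hdisj : ∀ i j, i ≠ j → Disjoint (closedBall (c i) (r i)) (closedBall (c j) (r j)))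
    {u : ℂ → ℂ} {v : Fin m → ℂ → ℂ} (hu : DifferentiableOn ℂ u (ball c₀ r₀))
    (hv : ∀ i, DifferentiableOn ℂ (v i) (closedBall (c i) (r i))ᶜ)
    (hlim : ∀ i, Tendsto (v i) (cocompact ℂ) (𝓝 0))
    (heq : ∀ z ∈ ball c₀ r₀ \ ⋃ i, closedBall (c i) (r i), u z + ∑ i, v i z = 0) :
    (∀ z ∈ ball c₀ r₀, u z = 0) ∧ ∀ i, ∀ z ∈ (closedBall (c i) (r i))ᶜ, v i z = 0 := by
  have hV : IsOpen (⋃ i, closedBall (c i) (r i))ᶜ :=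
    (isClosed_iUnion_of_finite fun _ => isClosed_closedBall).isOpen_compl
  have hvs : DifferentiableOn ℂ (fun z => - ∑ i, v i z) (⋃ i, closedBall (c i) (r i))ᶜ := by
    refine DifferentiableOn.fun_neg (DifferentiableOn.fun_sum fun i _ => (hv i).mono ?_)
    exact Set.compl_subset_compl.2 (Set.subset_iUnion (fun i => closedBall (c i) (r i)) i)
  have h1 := crd_glue isOpen_ball hV (fun z => ?_) hu hvs ?_ ?_ ?_
  · refine ⟨h1.1, fun i => ?_⟩
    have hU : IsOpen (⋃ j ∈ {j | j ≠ i}, closedBall (c j) (r j))ᶜ :=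
      ((Set.toFinite _).isClosed_biUnion fun _ _ => isClosed_closedBall).isOpen_compl
    have hws : DifferentiableOn ℂ (fun z => - ∑ j ∈ Finset.univ.erase i, v j z)
        (⋃ j ∈ {j | j ≠ i}, closedBall (c j) (r j))ᶜ := by
      refine DifferentiableOn.fun_neg (DifferentiableOn.fun_sum fun j hj => (hv j).mono ?_)
      refine Set.compl_subset_compl.2 fun z hz => ?_
      exact Set.mem_biUnion (show j ∈ {j | j ≠ i} from Finset.ne_of_mem_erase hj) hz
    refine (crd_glue hU isClosed_closedBall.isOpen_compl (fun z => ?_) hws (hv i) ?_ ?_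
      (hlim i)).2
    · by_cases hz : z ∈ closedBall (c i) (r i)
      · left
        simp only [Set.mem_compl_iff, Set.mem_iUnion, not_exists]
        intro j hj hzj
        exact Set.disjoint_left.1 (hdisj j i hj) hzj hz
      · exact Or.inr hz
    · intro z hz hzi
      have h2 := h1.2 z (by
        simp only [Set.mem_compl_iff, Set.mem_iUnion, not_exists]
        intro j hj
        by_cases hji : j = i
        · subst hji
          exact hzi hj
        · exact hz (Set.mem_biUnion (show j ∈ {j | j ≠ i} from hji) hj))
      rw [← Finset.add_sum_erase _ _ (Finset.mem_univ i)] at h2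
      linear_combination h2
    · exact (isCompact_closedBall _ _).compl_mem_cocompact
  · by_cases hz : z ∈ ⋃ i, closedBall (c i) (r i)
    · left
      obtain ⟨i, hi⟩ := Set.mem_iUnion.1 hz
      exact hsub i hi
    · exact Or.inr hz
  · intro z hz hzV
    linear_combination heq z ⟨hz, hzV⟩
  · exact (isCompact_iUnion fun i => isCompact_closedBall (c i) (r i)).compl_mem_cocompact
  · simpa using (tendsto_finsetSum Finset.univ fun i _ => hlim i).neg

lemma crd_eqOn_closedBall_compl {f : ℂ → ℂ} {c : ℂ} {r : ℝ} (hr : 0 < r)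
    (hf : ContinuousOn f (ball c r)ᶜ) (h0 : ∀ z ∈ (closedBall c r)ᶜ, f z = 0) :
    ∀ z ∈ (ball c r)ᶜ, f z = 0 := by
  have hcl : closure (closedBall c r)ᶜ = (ball c r)ᶜ := by
    rw [closure_compl, interior_closedBall _ hr.ne']
  have h1 : Set.EqOn f (fun _ => 0) (closedBall c r)ᶜ := h0
  exact h1.of_subset_closure hf continuousOn_const
    (Set.compl_subset_compl.2 ball_subset_closedBall) hcl.ge

/-- Laurent-type decomposition of holomorphic functions on a circular region
(as in Proposition `Cech-zero-cycles`): a circular region `G` is the open disk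
`B₁ = B(c₀,r₀)` with `m` pairwise disjoint closed disks `B̄(cᵢ,rᵢ) ⊆ B₁` removed
(total number of disks `k = m + 1 ≥ 1`).  Every `h` continuous on `Ḡ` and holomorphic on
`G` decomposes uniquely as `h = h₁ + Σᵢ hᵢ` with `h₁ ∈ 𝒪_(c)(B̄₁)` and each `hᵢ`
continuous on `ℂ ∖ Bᵢ`, holomorphic on `ℂ ∖ B̄ᵢ` and vanishing at infinity; moreover `h₁`
is given by the Cauchy integral of `h` over `∂B₁`. -/
theorem circular_region_decomposition
    (m : ℕ) (c₀ : ℂ) (r₀ : ℝ) (hr₀ : 0 < r₀)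
    (c : Fin m → ℂ) (r : Fin m → ℝ) (hr : ∀ i, 0 < r i)
    (hsub : ∀ i, closedBall (c i) (r i) ⊆ ball c₀ r₀)
    (hdisj : ∀ i j, i ≠ j → Disjoint (closedBall (c i) (r i)) (closedBall (c j) (r j)))
    (G : Set ℂ) (hG : G = ball c₀ r₀ \ ⋃ i, closedBall (c i) (r i))
    (h : ℂ → ℂ) (hcont : ContinuousOn h (closure G)) (hhol : DifferentiableOn ℂ h G) :
    ∃ (h₁ : ℂ → ℂ) (hin : Fin m → ℂ → ℂ),
      -- h₁ ∈ 𝒪_(c)(B̄₁)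
      ContinuousOn h₁ (closedBall c₀ r₀) ∧ DifferentiableOn ℂ h₁ (ball c₀ r₀) ∧
      -- hᵢ continuous on ℂ ∖ Bᵢ, holomorphic on ℂ ∖ B̄ᵢ, vanishing at infinity
      (∀ i, ContinuousOn (hin i) (ball (c i) (r i))ᶜ ∧
            DifferentiableOn ℂ (hin i) (closedBall (c i) (r i))ᶜ ∧
            Tendsto (hin i) (cocompact ℂ) (𝓝 0)) ∧
      -- the decomposition h = h₁ + Σᵢ hᵢ on Ḡ
      (∀ z ∈ closure G, h z = h₁ z + ∑ i, hin i z) ∧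
      -- h₁ is given by the Cauchy integral over ∂B₁
      (∀ z ∈ ball c₀ r₀,
        h₁ z = (2 * (Real.pi : ℂ) * Complex.I)⁻¹ * ∮ w in C(c₀, r₀), h w / (w - z)) ∧
      -- uniqueness of the decomposition
      (∀ (h₁' : ℂ → ℂ) (hin' : Fin m → ℂ → ℂ),
        ContinuousOn h₁' (closedBall c₀ r₀) → DifferentiableOn ℂ h₁' (ball c₀ r₀) →
        (∀ i, ContinuousOn (hin' i) (ball (c i) (r i))ᶜ ∧
              DifferentiableOn ℂ (hin' i) (closedBall (c i) (r i))ᶜ ∧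
              Tendsto (hin' i) (cocompact ℂ) (𝓝 0)) →
        (∀ z ∈ closure G, h z = h₁' z + ∑ i, hin' i z) →
        (∀ z ∈ closedBall c₀ r₀, h₁' z = h₁ z) ∧
        (∀ i, ∀ z ∈ (ball (c i) (r i))ᶜ, hin' i z = hin i z)) := by
  classical
  subst hG
  have hGopen : IsOpen (ball c₀ r₀ \ ⋃ i, closedBall (c i) (r i)) :=
    isOpen_ball.sdiff (isClosed_iUnion_of_finite fun _ => isClosed_closedBall)
  have hUopen : IsOpen (⋃ i, closedBall (c i) (r i))ᶜ :=
    (isClosed_iUnion_of_finite fun _ => isClosed_closedBall).isOpen_compl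
  choose R hrR hRsub hRdisj using crd_radius hr hsub hdisj
  have hann : ∀ i, closedBall (c i) (R i) \ ball (c i) (r i) ⊆
      closure (ball c₀ r₀ \ ⋃ i, closedBall (c i) (r i)) := by
    intro i z hz
    refine crd_closure hr₀ hr hsub hdisj (ball_subset_closedBall (hRsub i hz.1)) fun j => ?_
    by_cases hji : j = i
    · subst hji
      exact hz.2
    · exact fun hb => hRdisj i j hji z hz.1 (ball_subset_closedBall hb)
  have hann' : ∀ i, ball (c i) (R i) \ closedBall (c i) (r i) ⊆
      ball c₀ r₀ \ ⋃ i, closedBall (c i) (r i) := by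
    intro i z hz
    refine ⟨hRsub i (ball_subset_closedBall hz.1), ?_⟩
    simp only [Set.mem_iUnion, not_exists]
    intro j
    by_cases hji : j = i
    · subst hji
      exact hz.2
    · exact hRdisj i j hji z (ball_subset_closedBall hz.1)
  choose F K hK hFc hFd hFlim hFK using fun i =>
    crd_hole (hr i) (hrR i) (hcont.mono (hann i)) (hhol.mono (hann' i))
  have hFat : ∀ i z, z ∉ closedBall (c i) (r i) → DifferentiableAt ℂ (F i) z := fun i z hz =>
    (hFd i z hz).differentiableAt (isClosed_closedBall.isOpen_compl.mem_nhds hz)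
  let P : ℂ → ℂ := fun z => h z - ∑ i, F i z
  have hPd : DifferentiableOn ℂ P (ball c₀ r₀) := by
    intro z hz
    refine DifferentiableAt.differentiableWithinAt ?_
    by_cases hzU : ∃ i, z ∈ closedBall (c i) (r i)
    · obtain ⟨i, hi⟩ := hzU
      have hzR : z ∈ ball (c i) (R i) := closedBall_subset_ball (hrR i) hi
      have h1 : DifferentiableAt ℂ (fun z => K i z - ∑ j ∈ Finset.univ.erase i, F j z) z := by
        refine DifferentiableAt.fun_sub ((hK i z hzR).differentiableAt (isOpen_ball.mem_nhds hzR)) ?_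
        refine DifferentiableAt.fun_sum fun j hj => hFat j z ?_
        exact hRdisj i j (Finset.ne_of_mem_erase hj) z (ball_subset_closedBall hzR)
      refine h1.congr_of_eventuallyEq ?_
      filter_upwards [isOpen_ball.mem_nhds hzR] with w hw
      simp only [P]
      rw [← Finset.add_sum_erase _ _ (Finset.mem_univ i), hFK i w hw]
      ring
    · have hzG : z ∈ ball c₀ r₀ \ ⋃ i, closedBall (c i) (r i) :=
        ⟨hz, by simpa only [Set.mem_iUnion] using hzU⟩
      refine DifferentiableAt.fun_sub ((hhol z hzG).differentiableAt (hGopen.mem_nhds hzG)) ?_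
      exact DifferentiableAt.fun_sum fun j _ => hFat j z fun hj => hzU ⟨j, hj⟩
  have hPc : ContinuousOn P (closedBall c₀ r₀) := by
    intro z hz
    by_cases hzb : z ∈ ball c₀ r₀
    · exact ((hPd z hzb).differentiableAt
        (isOpen_ball.mem_nhds hzb)).continuousAt.continuousWithinAt
    · have hzU : z ∈ (⋃ i, closedBall (c i) (r i))ᶜ := by
        simp only [Set.mem_compl_iff, Set.mem_iUnion, not_exists]
        exact fun i hi => hzb (hsub i hi)
      have hsubc : closedBall c₀ r₀ ∩ (⋃ i, closedBall (c i) (r i))ᶜ ⊆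
          closure (ball c₀ r₀ \ ⋃ i, closedBall (c i) (r i)) := fun w hw =>
        crd_closure hr₀ hr hsub hdisj hw.1 fun i hi =>
          hw.2 (Set.mem_iUnion.2 ⟨i, ball_subset_closedBall hi⟩)
      refine (continuousWithinAt_inter (hUopen.mem_nhds hzU)).1 ?_
      refine ContinuousWithinAt.sub ((hcont z (hsubc ⟨hz, hzU⟩)).mono hsubc) ?_
      exact tendsto_finsetSum _ fun i _ =>
        (hFat i z fun hi => hzb (hsub i hi)).continuousAt.continuousWithinAt
  refine ⟨P, F, hPc, hPd, fun i => ⟨hFc i, hFd i, hFlim i⟩, fun z _ => by simp [P], ?_, ?_⟩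
  · intro z hz
    have hne : ∀ w ∈ sphere c₀ r₀, w - z ≠ 0 := by
      intro w hw h0
      rw [sub_eq_zero.1 h0, mem_sphere] at hw
      exact absurd hw (mem_ball.1 hz).ne
    have hC := Complex.circleIntegral_div_sub_of_differentiable_on_off_countable
      Set.countable_empty hz hPc
      (fun w hw => (hPd w hw.1).differentiableAt (isOpen_ball.mem_nhds hw.1))
    have hF0 : ∀ i, (∮ w in C(c₀, r₀), F i w / (w - z)) = 0 := fun i =>
      crd_outer_zero hr₀ (fun w hw => hFat i w fun hi => hw (hsub i hi)) (hFlim i) hz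
    have hdc : ContinuousOn (fun w : ℂ => w - z) (sphere c₀ r₀) := by fun_prop
    have hFs : ∀ i, ContinuousOn (fun w => F i w / (w - z)) (sphere c₀ r₀) := fun i =>
      ContinuousOn.div (fun w hw => (hFat i w fun hi => by
        have := mem_ball.1 (hsub i hi)
        rw [mem_sphere.1 hw] at this
        exact lt_irrefl _ this).continuousAt.continuousWithinAt) hdc hne
    have hPs : ContinuousOn (fun w => P w / (w - z)) (sphere c₀ r₀) :=
      (hPc.mono sphere_subset_closedBall).div hdc hne
    have hsum : (∮ w in C(c₀, r₀), h w / (w - z)) = ∮ w in C(c₀, r₀), P w / (w - z) := by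
      have e1 : (∮ w in C(c₀, r₀), h w / (w - z)) =
          ∮ w in C(c₀, r₀), (P w / (w - z) + ∑ i, F i w / (w - z)) := by
        congr 1
        funext w
        simp only [P]
        rw [← Finset.sum_div, ← add_div, sub_add_cancel]
      rw [e1, circleIntegral.integral_add (hPs.circleIntegrable hr₀.le)
        ((continuousOn_finsetSum _ fun i _ => hFs i).circleIntegrable hr₀.le),
        circleIntegral.integral_fun_sum (fun i _ => (hFs i).circleIntegrable hr₀.le)]
      simp [hF0]
    rw [hsum, hC, inv_mul_cancel_left₀ Complex.two_pi_I_ne_zero]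
  · intro h₁' hin' hc' hd' hi' heq'
    have huniq := crd_unique hsub hdisj (u := fun z => h₁' z - P z)
      (v := fun i z => hin' i z - F i z) (hd'.fun_sub hPd) (fun i => (hi' i).2.1.fun_sub (hFd i))
      (fun i => by simpa using (hi' i).2.2.sub (hFlim i)) (by
        intro z hz
        have := heq' z (subset_closure hz)
        simp only [P, Finset.sum_sub_distrib]
        linear_combination -this)
    constructor
    · intro z hz
      have h1 : Set.EqOn h₁' P (ball c₀ r₀) := fun w hw => sub_eq_zero.1 (huniq.1 w hw)
      exact h1.of_subset_closure hc' hPc ball_subset_closedBall (closure_ball c₀ hr₀.ne').ge hz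
    · intro i z hz
      exact sub_eq_zero.1 (crd_eqOn_closedBall_compl (f := fun z => hin' i z - F i z) (hr i)
        ((hi' i).1.fun_sub (hFc i)) (huniq.2 i) z hz)
end

section
/- (Inhomogeneous Cauchy integral formula on the unit disk.) Let f be a complex-valued function which is continuously differentiable on an open neighbourhood of the closed unit disk 𝔻̄ ⊆ ℂ. Then for every z with |z| < 1: f(z) = (1/2πi) ∮_{|w|=1} f(w)/(w−z) dw − (1/π) ∫_𝔻 (∂̄f)(w)/(w−z) dμ(w), where the circle integral is taken counterclockwise. -/
open Metric MeasureTheory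

/-- Twice the Wirtinger derivative. -/
noncomputable def dbarTwo (G : ℂ → ℂ) (w : ℂ) : ℂ :=
  fderiv ℝ G w 1 + Complex.I * fderiv ℝ G w Complex.I

lemma integral_ball_polar (c : ℂ) (R : ℝ) (F : ℂ → ℂ) :
    ∫ w in ball c R, F w =
      ∫ p in Set.Ioo (0:ℝ) R ×ˢ Set.Ioo (-Real.pi) Real.pi,
        (p.1 : ℂ) * F (circleMap c p.1 p.2) := by
  rw [← integral_indicator measurableSet_ball, ← integral_add_left_eq_self _ c,
    ← Complex.integral_comp_polarCoord_symm]
  have hsub : Set.Ioo (0:ℝ) R ×ˢ Set.Ioo (-Real.pi) Real.pi ⊆ polarCoord.target := by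
    rintro ⟨r, θ⟩ ⟨h1, h2⟩
    exact ⟨h1.1, h2⟩
  symm
  rw [← integral_indicator (measurableSet_Ioo.prod measurableSet_Ioo),
    ← integral_indicator (by exact measurableSet_Ioi.prod measurableSet_Ioo)]
  congr 1
  ext ⟨r, θ⟩
  simp only [Set.indicator_apply]
  by_cases h : (r, θ) ∈ polarCoord.target
  · have h' := h
    obtain ⟨hr, hθ⟩ := h
    have hr : 0 < r := hr
    have hn : dist (c + (r:ℂ) * (Real.cos θ + Real.sin θ * Complex.I)) c = r := by
      have := Complex.norm_polarCoord_symm (r, θ)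
      rw [Complex.polarCoord_symm_apply] at this
      simp only [dist_eq_norm, add_sub_cancel_left]
      rw [this, abs_of_pos hr]
    have he : circleMap c r θ = c + (r:ℂ) * (Real.cos θ + Real.sin θ * Complex.I) := by
      rw [circleMap, Complex.exp_mul_I]; simp
    rw [Set.indicator_of_mem h', Complex.polarCoord_symm_apply]
    simp only [← he] at hn ⊢
    have hθ' : -Real.pi < θ ∧ θ < Real.pi := hθ
    by_cases hR : r < R
    · rw [Set.indicator_of_mem (by rw [mem_ball, hn]; exact hR), if_pos ⟨⟨hr, hR⟩, hθ'⟩]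
      simp
    · rw [Set.indicator_of_notMem (by rw [mem_ball, hn]; exact hR),
        if_neg (fun h1 => hR h1.1.2)]
      simp
  · rw [Set.indicator_of_notMem h, if_neg (fun h1 => h (hsub h1))]

lemma hasDerivAt_circleMap_radius (c : ℂ) (r θ : ℝ) :
    HasDerivAt (fun r : ℝ => circleMap c r θ) (Complex.exp (θ * Complex.I)) r := by
  have := ((Complex.ofRealCLM.hasDerivAt (x := r)).mul_const
    (Complex.exp (θ * Complex.I))).const_add c
  simpa [circleMap] using this

lemma dbar_key (L : ℂ →L[ℝ] ℂ) (θ : ℝ) :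
    L (Complex.exp (θ * Complex.I)) + Complex.I * L (Complex.I * Complex.exp (θ * Complex.I)) =
      (L 1 + Complex.I * L Complex.I) * (Complex.exp (θ * Complex.I))⁻¹ := by
  have e1 : Complex.exp (θ * Complex.I) = Real.cos θ • (1:ℂ) + Real.sin θ • Complex.I := by
    rw [Complex.exp_mul_I]; simp
  have e2 : Complex.I * Complex.exp (θ * Complex.I) =
      (-Real.sin θ) • (1:ℂ) + Real.cos θ • Complex.I := by
    rw [Complex.exp_mul_I]; simp
    linear_combination (Complex.sin θ) * Complex.I_sq
  rw [e2, e1, map_add, map_add, map_smul, map_smul, map_smul, map_smul, ← e1, ← Complex.exp_neg,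
    ← neg_mul, Complex.exp_mul_I, Complex.cos_neg, Complex.sin_neg]
  simp only [Complex.real_smul, Complex.ofReal_neg, Complex.ofReal_cos, Complex.ofReal_sin]
  linear_combination (Complex.sin θ * L Complex.I) * Complex.I_sq

lemma integral_polar_center (c : ℂ) (R : ℝ) (hR : 0 ≤ R) (G : ℂ → ℂ) (hG : ContDiff ℝ 1 G) :
    ∫ w in ball c R, dbarTwo G w / (w - c) =
      ∫ θ in (-Real.pi)..Real.pi, (G (circleMap c R θ) - G c) := by
  have hpi : -Real.pi ≤ Real.pi := by linarith [Real.pi_pos]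
  have hD : Continuous (fderiv ℝ G) := hG.continuous_fderiv (by norm_num)
  have hcm : Continuous fun p : ℝ × ℝ => circleMap c p.1 p.2 := by
    unfold circleMap; fun_prop
  have hcA : Continuous fun p : ℝ × ℝ =>
      fderiv ℝ G (circleMap c p.1 p.2) (Complex.exp (p.2 * Complex.I)) :=
    (hD.comp hcm).clm_apply (by fun_prop)
  have hcB : Continuous fun p : ℝ × ℝ =>
      fderiv ℝ G (circleMap c p.1 p.2) (Complex.I * Complex.exp (p.2 * Complex.I)) :=
    (hD.comp hcm).clm_apply (by fun_prop)
  have hint : ∀ H : ℝ × ℝ → ℂ, Continuous H →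
      IntegrableOn H (Set.Ioo (0:ℝ) R ×ˢ Set.Ioo (-Real.pi) Real.pi) := fun H hH =>
    (hH.continuousOn.integrableOn_compact
      (isCompact_Icc.prod isCompact_Icc : IsCompact (Set.Icc (0:ℝ) R ×ˢ
        Set.Icc (-Real.pi) Real.pi))).mono_set
      (Set.prod_mono Set.Ioo_subset_Icc_self Set.Ioo_subset_Icc_self)
  have hms : MeasurableSet (Set.Ioo (0:ℝ) R ×ˢ Set.Ioo (-Real.pi) Real.pi) :=
    measurableSet_Ioo.prod measurableSet_Ioo
  rw [integral_ball_polar]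
  have hstep : ∫ p in Set.Ioo (0:ℝ) R ×ˢ Set.Ioo (-Real.pi) Real.pi,
        (p.1 : ℂ) * (dbarTwo G (circleMap c p.1 p.2) / (circleMap c p.1 p.2 - c)) =
      ∫ p in Set.Ioo (0:ℝ) R ×ˢ Set.Ioo (-Real.pi) Real.pi,
        (fderiv ℝ G (circleMap c p.1 p.2) (Complex.exp (p.2 * Complex.I)) +
        Complex.I * fderiv ℝ G (circleMap c p.1 p.2)
          (Complex.I * Complex.exp (p.2 * Complex.I))) := by
    refine setIntegral_congr_fun hms ?_
    rintro ⟨r, θ⟩ ⟨⟨hr, -⟩, -⟩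
    have hr : (r:ℂ) ≠ 0 := by exact_mod_cast (ne_of_gt hr)
    simp only [dbar_key]
    have hex := Complex.exp_ne_zero (θ * Complex.I)
    have : circleMap c r θ - c = r * Complex.exp (θ * Complex.I) := by simp [circleMap]
    rw [this, dbarTwo]
    field_simp
  rw [hstep, integral_add (hint _ hcA) ((hint _ hcB).const_mul _), integral_const_mul]
  have hB : ∫ p in Set.Ioo (0:ℝ) R ×ˢ Set.Ioo (-Real.pi) Real.pi,
      fderiv ℝ G (circleMap c p.1 p.2) (Complex.I * Complex.exp (p.2 * Complex.I)) = 0 := by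
    rw [Measure.volume_eq_prod, setIntegral_prod _ (hint _ hcB)]
    rw [setIntegral_congr_fun (g := fun _ => 0) measurableSet_Ioo]
    · simp
    · intro r hr
      have hr0 : r ≠ 0 := ne_of_gt hr.1
      simp only
      rw [← integral_Ioc_eq_integral_Ioo, ← intervalIntegral.integral_of_le hpi]
      have hder : ∀ θ ∈ Set.uIcc (-Real.pi) Real.pi,
          HasDerivAt (fun θ : ℝ => r⁻¹ • G (circleMap c r θ))
          (fderiv ℝ G (circleMap c r θ) (Complex.I * Complex.exp (θ * Complex.I))) θ := by
        intro θ _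
        have h1 := ((hG.differentiable (by norm_num) (circleMap c r θ)).hasFDerivAt.comp_hasDerivAt
          θ (hasDerivAt_circleMap c r θ)).const_smul r⁻¹
        refine h1.congr_deriv ?_
        rw [← map_smul]
        congr 1
        simp only [circleMap, zero_add, Complex.real_smul, Complex.ofReal_inv]
        have : (r:ℂ) ≠ 0 := by exact_mod_cast hr0
        field_simp
      rw [intervalIntegral.integral_eq_sub_of_hasDerivAt hder]
      · have : circleMap c r Real.pi = circleMap c r (-Real.pi) := by
          have := periodic_circleMap c r (-Real.pi)
          rw [← this]; congr 1; ring
        simp [this]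
      · exact (hcB.comp (by fun_prop : Continuous fun θ : ℝ => (r, θ))).intervalIntegrable _ _
  rw [hB, mul_zero, add_zero, Measure.volume_eq_prod, ← setIntegral_prod_swap,
    intervalIntegral.integral_of_le hpi, integral_Ioc_eq_integral_Ioo]
  refine (setIntegral_prod _ ?_).trans ?_
  · exact (hint _ hcA).swap
  refine setIntegral_congr_fun measurableSet_Ioo ?_
  intro θ _
  simp only [Prod.fst_swap, Prod.snd_swap]
  rw [← integral_Ioc_eq_integral_Ioo, ← intervalIntegral.integral_of_le hR]
  have hder : ∀ r ∈ Set.uIcc 0 R, HasDerivAt (fun r : ℝ => G (circleMap c r θ))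
      (fderiv ℝ G (circleMap c r θ) (Complex.exp (θ * Complex.I))) r := fun r _ =>
    (hG.differentiable (by norm_num) (circleMap c r θ)).hasFDerivAt.comp_hasDerivAt
      r (hasDerivAt_circleMap_radius c r θ)
  rw [intervalIntegral.integral_eq_sub_of_hasDerivAt hder]
  · simp
  · exact (hcA.comp (by fun_prop : Continuous fun r : ℝ => (r, θ))).intervalIntegrable _ _

lemma dbarTwo_mul {a b : ℂ → ℂ} {w : ℂ} (ha : DifferentiableAt ℝ a w)
    (hb : DifferentiableAt ℝ b w) :
    dbarTwo (fun w => a w * b w) w = a w * dbarTwo b w + b w * dbarTwo a w := by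
  simp only [dbarTwo]
  rw [fderiv_fun_mul ha hb]
  simp
  ring

lemma dbarTwo_sub_const (z w : ℂ) : dbarTwo (fun w => w - z) w = 0 := by
  simp [dbarTwo, fderiv_sub_const]

lemma dbarTwo_congr {a b : ℂ → ℂ} {w : ℂ} (h : a =ᶠ[nhds w] b) : dbarTwo a w = dbarTwo b w := by
  simp [dbarTwo, h.fderiv_eq]

lemma dbarTwo_continuous {G : ℂ → ℂ} (hG : ContDiff ℝ 1 G) : Continuous (dbarTwo G) := by
  have hD : Continuous (fderiv ℝ G) := hG.continuous_fderiv (by norm_num)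
  unfold dbarTwo
  exact (hD.clm_apply continuous_const).add
    (continuous_const.mul (hD.clm_apply continuous_const))

lemma ae_ne (z : ℂ) (s : Set ℂ) : ∀ᵐ w ∂(volume.restrict s), w ≠ z :=
  ae_restrict_of_ae (Measure.ae_ne volume z)

/-- Green's formula on the unit disk. -/
lemma green_disk (G : ℂ → ℂ) (hG : ContDiff ℝ 1 G) :
    (∮ w in C(0, 1), G w) = Complex.I * ∫ w in ball (0:ℂ) 1, dbarTwo G w := by
  have h := integral_polar_center 0 1 zero_le_one (fun w => (w - 0) * G w)
    ((contDiff_id.sub contDiff_const).mul hG)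
  have h2 : ∫ w in ball (0:ℂ) 1, dbarTwo G w =
      ∫ w in ball (0:ℂ) 1, dbarTwo (fun w => (w - 0) * G w) w / (w - 0) := by
    refine integral_congr_ae ?_
    filter_upwards [ae_ne 0 (ball (0:ℂ) 1)] with w hw
    rw [dbarTwo_mul (by fun_prop) (hG.differentiable (by norm_num) w), dbarTwo_sub_const]
    have : w - 0 ≠ 0 := by simpa using hw
    field_simp
    simp
  rw [h2, h]
  have hper : Function.Periodic (fun θ : ℝ => deriv (circleMap 0 1) θ • G (circleMap 0 1 θ))
      (2 * Real.pi) := by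
    intro θ
    simp only [deriv_circleMap, periodic_circleMap 0 1 θ]
  have h3 := hper.intervalIntegral_add_eq 0 (-Real.pi)
  rw [circleIntegral]
  rw [zero_add, show -Real.pi + 2 * Real.pi = Real.pi by ring] at h3
  rw [h3, ← intervalIntegral.integral_const_mul]
  congr 1
  ext θ
  simp only [deriv_circleMap, smul_eq_mul]
  ring

lemma integrable_cauchy_kernel (z : ℂ) (K : ℂ → ℂ) (hK : Continuous K) :
    IntegrableOn (fun w => K w / (w - z)) (closedBall (0:ℂ) 1) := by
  have h1 : Integrable (fun w : ℂ => (Set.Iio (2 + ‖z‖)).indicator (fun r : ℝ => r⁻¹) ‖w‖) := by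
    rw [integrable_fun_norm_addHaar volume (f := (Set.Iio (2 + ‖z‖)).indicator (fun r : ℝ => r⁻¹))]
    have : IntegrableOn ((Set.Iio (2 + ‖z‖)).indicator (fun _ : ℝ => (1:ℝ))) (Set.Ioi 0) := by
      rw [IntegrableOn, integrable_indicator_iff measurableSet_Iio, IntegrableOn,
        Measure.restrict_restrict measurableSet_Iio, Set.inter_comm, Set.Ioi_inter_Iio]
      exact integrableOn_const (by simp)
    refine this.congr_fun ?_ measurableSet_Ioi
    intro r hr
    have hr : r ≠ 0 := ne_of_gt hr
    by_cases h : r < 2 + ‖z‖ <;> simp [h, hr, Complex.finrank_real_complex]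
  have h2 := h1.comp_sub_right z
  have h3 : IntegrableOn (fun w : ℂ => (w - z)⁻¹) (closedBall (0:ℂ) 1) := by
    refine Integrable.mono' h2.integrableOn (by fun_prop) ?_
    refine (ae_restrict_iff' measurableSet_closedBall).2 (Filter.Eventually.of_forall ?_)
    intro w hw
    have : ‖w - z‖ < 2 + ‖z‖ := by
      have := norm_sub_le w z
      simp at hw
      linarith
    simp [this]
  simpa [div_eq_mul_inv] using
    h3.continuousOn_mul hK.continuousOn (isCompact_closedBall _ _)

lemma cauchy_global (f : ℂ → ℂ) (hf : ContDiff ℝ 1 f) (z : ℂ) (hz : z ∈ ball (0:ℂ) 1) :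
    (2 * (Real.pi : ℂ) * Complex.I) * f z = (∮ w in C(0, 1), f w / (w - z)) -
      Complex.I * ∫ w in ball (0:ℂ) 1, dbarTwo f w / (w - z) := by
  have hz1 : ‖z‖ < 1 := by simpa using hz
  let φ : ContDiffBump z := ⟨(1 - ‖z‖) / 4, (1 - ‖z‖) / 2, by linarith, by linarith⟩
  have hφout : ∀ w, (1 - ‖z‖) / 2 ≤ dist w z → φ w = 0 := fun w hw => φ.zero_of_le_dist hw
  have hφc : ContDiff ℝ 1 (fun w => (φ w : ℂ)) := Complex.ofRealCLM.contDiff.comp φ.contDiff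
  set g : ℂ → ℂ := fun w => φ w * f w with hgdef
  have hg : ContDiff ℝ 1 g := hφc.mul hf
  set h : ℂ → ℂ := fun w => (1 - φ w) * f w / (w - z) with hhdef
  have hh : ContDiff ℝ 1 h := by
    rw [contDiff_iff_contDiffAt]
    intro w
    by_cases hw : w = z
    · subst hw
      refine (contDiffAt_const (c := (0:ℂ))).congr_of_eventuallyEq ?_
      filter_upwards [φ.eventuallyEq_one] with v hv
      simp [hhdef, hv]
    · have hinv : ContDiffAt ℝ 1 (fun v : ℂ => (v - z)⁻¹) w :=
        (contDiff_id.sub contDiff_const).contDiffAt.inv (sub_ne_zero.2 hw)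
      simp only [hhdef, div_eq_mul_inv]
      exact ((contDiff_const.sub hφc).mul hf).contDiffAt.mul hinv
  have hdf : Differentiable ℝ f := hf.differentiable (by norm_num)
  have hdg : Differentiable ℝ g := hg.differentiable (by norm_num)
  have hdh : Differentiable ℝ h := hh.differentiable (by norm_num)
  -- the identity of derivatives
  have hderiv : ∀ w, w ≠ z → dbarTwo f w / (w - z) = dbarTwo g w / (w - z) + dbarTwo h w := by
    intro w hw
    have hne : w - z ≠ 0 := sub_ne_zero.2 hw
    have e : dbarTwo (fun w => f w - g w) w = dbarTwo (fun w => (w - z) * h w) w := by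
      apply dbarTwo_congr
      filter_upwards [isOpen_ne.mem_nhds hw] with v hv
      have hv : v - z ≠ 0 := sub_ne_zero.2 hv
      simp only [hgdef, hhdef]
      field_simp
    rw [dbarTwo_mul (by fun_prop) (hdh w), dbarTwo_sub_const] at e
    have e2 : dbarTwo (fun w => f w - g w) w = dbarTwo f w - dbarTwo g w := by
      simp only [dbarTwo]
      rw [fderiv_fun_sub (hdf w) (hdg w)]
      simp
      ring
    rw [e2] at e
    field_simp
    linear_combination e
  have hIg := (integrable_cauchy_kernel z _ (dbarTwo_continuous hg)).mono_set
    (ball_subset_closedBall)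
  have hIh : IntegrableOn (dbarTwo h) (ball (0:ℂ) 1) :=
    ((dbarTwo_continuous hh).continuousOn.integrableOn_compact
      (isCompact_closedBall _ _)).mono_set ball_subset_closedBall
  have hsplit : ∫ w in ball (0:ℂ) 1, dbarTwo f w / (w - z) =
      (∫ w in ball (0:ℂ) 1, dbarTwo g w / (w - z)) + ∫ w in ball (0:ℂ) 1, dbarTwo h w := by
    rw [← integral_add hIg hIh]
    refine integral_congr_ae ?_
    filter_upwards [ae_ne z (ball (0:ℂ) 1)] with w hw using hderiv w hw
  have hcirc : (∮ w in C(0, 1), f w / (w - z)) = ∮ w in C(0, 1), h w := by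
    refine circleIntegral.integral_congr zero_le_one ?_
    intro w hw
    have hw1 : ‖w‖ = 1 := by simpa using hw
    have : φ w = 0 := by
      apply hφout
      rw [dist_eq_norm]
      have := norm_sub_norm_le w z
      linarith
    simp [hhdef, this]
  have hgz : g z = f z := by
    have : φ z = 1 := φ.eventuallyEq_one.eq_of_nhds
    simp [hgdef, this]
  have hg2 : ∫ w in ball (0:ℂ) 1, dbarTwo g w / (w - z) =
      ∫ w in ball z 2, dbarTwo g w / (w - z) := by
    refine (setIntegral_eq_of_subset_of_forall_sdiff_eq_zero measurableSet_ball ?_ ?_).symm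
    · intro w hw
      simp only [mem_ball, dist_eq_norm, sub_zero] at hw ⊢
      have := norm_sub_le w z
      linarith
    · rintro w ⟨-, hw⟩
      have hw1 : 1 ≤ ‖w‖ := by simpa using hw
      have hd : (1 - ‖z‖) / 2 < dist w z := by
        rw [dist_eq_norm]
        have := norm_sub_norm_le w z
        linarith
      have : dbarTwo g w = dbarTwo (fun _ => (0:ℂ)) w := by
        apply dbarTwo_congr
        have ho : IsOpen {v : ℂ | (1 - ‖z‖) / 2 < dist v z} :=
          isOpen_lt continuous_const (by fun_prop)
        filter_upwards [ho.mem_nhds hd] with v hv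
        simp [hgdef, hφout v (le_of_lt hv)]
      rw [this]
      simp [dbarTwo]
  have hg3 := integral_polar_center z 2 zero_le_two g hg
  have hg4 : ∀ θ : ℝ, g (circleMap z 2 θ) = 0 := by
    intro θ
    have : φ (circleMap z 2 θ) = 0 := by
      apply hφout
      have := norm_nonneg z
      have h2 : dist (circleMap z 2 θ) z = 2 := by simp [dist_eq_norm, circleMap]
      rw [h2]; linarith
    simp [hgdef, this]
  simp only [hg4, hgz, intervalIntegral.integral_const] at hg3
  rw [hsplit, hg2, hg3, hcirc, green_disk h hh]
  simp
  ring

theorem inhomogeneous_cauchy_integral_formula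
    (f : ℂ → ℂ) (U : Set ℂ) (hU : IsOpen U) (hsub : closedBall (0:ℂ) 1 ⊆ U)
    (hf : ContDiffOn ℝ 1 f U) :
    ∀ z ∈ ball (0:ℂ) 1,
      f z = (2 * (Real.pi : ℂ) * Complex.I)⁻¹ * (∮ w in C(0, 1), f w / (w - z)) -
        (Real.pi : ℂ)⁻¹ * ∫ w in ball (0:ℂ) 1,
          ((1 / 2 : ℂ) * (fderiv ℝ f w 1 + Complex.I * fderiv ℝ f w Complex.I)) / (w - z) := by
  intro z hz
  obtain ⟨δ, hδ, hth⟩ := (isCompact_closedBall (0:ℂ) 1).exists_thickening_subset_open hU hsub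
  rw [thickening_closedBall hδ zero_le_one] at hth
  let χ : ContDiffBump (0:ℂ) := ⟨1 + δ / 4, 1 + δ / 2, by linarith, by linarith⟩
  have hχc : ContDiff ℝ 1 (fun w => (χ w : ℂ)) := Complex.ofRealCLM.contDiff.comp χ.contDiff
  set F : ℂ → ℂ := fun w => χ w * f w with hFdef
  have hF : ContDiff ℝ 1 F := by
    rw [contDiff_iff_contDiffAt]
    intro w
    by_cases hw : w ∈ U
    · exact hχc.contDiffAt.mul (hf.contDiffAt (hU.mem_nhds hw))
    · have hw2 : 1 + δ / 2 < dist w 0 := by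
        by_contra hcon
        apply hw
        apply hth
        rw [mem_ball]
        linarith
      refine (contDiffAt_const (c := (0:ℂ))).congr_of_eventuallyEq ?_
      have ho : IsOpen {v : ℂ | 1 + δ / 2 < dist v 0} :=
        isOpen_lt continuous_const (by fun_prop)
      filter_upwards [ho.mem_nhds hw2] with v hv
      have : χ v = 0 := χ.zero_of_le_dist (le_of_lt hv)
      simp [hFdef, this]
  have hFe : ∀ w, dist w 0 ≤ 1 → F =ᶠ[nhds w] f := by
    intro w hw
    have : w ∈ ball (0:ℂ) χ.rIn := by
      rw [mem_ball]
      have : χ.rIn = 1 + δ / 4 := rfl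
      linarith
    filter_upwards [χ.eventuallyEq_one_of_mem_ball this] with v hv
    simp [hFdef, hv]
  have key := cauchy_global F hF z hz
  rw [(hFe z (le_of_lt hz)).eq_of_nhds] at key
  have hc : (∮ w in C(0, 1), F w / (w - z)) = ∮ w in C(0, 1), f w / (w - z) := by
    refine circleIntegral.integral_congr zero_le_one ?_
    intro w hw
    simp only
    rw [(hFe w (le_of_eq hw)).eq_of_nhds]
  have hi : ∫ w in ball (0:ℂ) 1, ((1 / 2 : ℂ) *
      (fderiv ℝ f w 1 + Complex.I * fderiv ℝ f w Complex.I)) / (w - z) =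
      (1 / 2 : ℂ) * ∫ w in ball (0:ℂ) 1, dbarTwo F w / (w - z) := by
    rw [← integral_const_mul]
    refine setIntegral_congr_fun measurableSet_ball ?_
    intro w hw
    simp only
    rw [dbarTwo_congr (hFe w (le_of_lt hw)), dbarTwo, mul_div_assoc]
  rw [hi, ← hc]
  have hpi : (Real.pi : ℂ) ≠ 0 := by exact_mod_cast Real.pi_ne_zero
  have hI := Complex.I_ne_zero
  field_simp
  linear_combination key
end
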